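/- arXiv:1009.0382 — 5 statements merged into one kernel-verified Lean document; each statement's English description precedes it below -/
import Mathlib

section
/- Let d, n be positive integers, m_1,…,m_n ∈ ℕ^d, let s_1,…,s_n ∈ ℕ and set m = s_1m_1 + ⋯ + s_nm_n. Let ℓ be a positive integer such that gcd(ℓ, m_j) = 1 for some component m_j of m. Then, inside ℤ^d, the intersection of the subgroup generated by ℓm_1,…,ℓm_n with the subgroup generated by m equals the subgroup generated by ℓm (i.e., ℤ{ℓm_1,…,ℓm_n} ∩ ℤ{m} = ℤ(ℓm), so the semigroup S_{ℓ,m} generated by ℓm_1,…,ℓm_n, m is the gluing of ℕ{ℓm_1,…,ℓm_n} and ℕ{m}). -/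
/-!
If `a • w = r • y`, then applying a linear functional `f` gives `r ∣ a * f w`. When `f w` is coprime
to `r` this forces `r ∣ a`, that is, `a • w` is a multiple of `r • w`. For vectors in `ℤ^d`, `f` is
the coordinate in which the vector is coprime to `ℓ`.
-/

open scoped Pointwise

section Module

variable {R M ι : Type*} [CommSemiring R] [AddCommMonoid M] [Module R M] {N : Submodule R M}
  {r : R} {w : M}

theorem dvd_apply_of_mem_smul {x : M} (hx : x ∈ r • N) (f : M →ₗ[R] R) : r ∣ f x := by
  obtain ⟨y, -, rfl⟩ := (Submodule.mem_smul_pointwise_iff_exists x r N).1 hx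
  exact ⟨f y, map_smul f r y⟩

theorem smul_inf_span_singleton_le (f : M →ₗ[R] R) (hr : IsCoprime r (f w)) :
    r • N ⊓ Submodule.span R {w} ≤ Submodule.span R {r • w} := by
  rintro x ⟨hxN, hxw⟩
  obtain ⟨a, rfl⟩ := Submodule.mem_span_singleton.1 hxw
  have r_dvd_mul : r ∣ a * f w := by simpa using dvd_apply_of_mem_smul hxN f
  obtain ⟨b, rfl⟩ := hr.dvd_of_dvd_mul_right r_dvd_mul
  exact Submodule.mem_span_singleton.2 ⟨b, by rw [smul_smul, mul_comm]⟩

theorem span_singleton_smul_le_inf (hw : w ∈ N) (r : R) :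
    Submodule.span R {r • w} ≤ r • N ⊓ Submodule.span R {w} :=
  le_inf ((Submodule.span_singleton_le_iff_mem _ _).2 (Submodule.smul_mem_pointwise_smul w r N hw))
    (Submodule.span_singleton_smul_le R r w)

theorem smul_inf_span_singleton (hw : w ∈ N) (f : M →ₗ[R] R) (hr : IsCoprime r (f w)) :
    r • N ⊓ Submodule.span R {w} = Submodule.span R {r • w} :=
  (smul_inf_span_singleton_le f hr).antisymm (span_singleton_smul_le_inf hw r)

theorem stmt_0_general {v : ι → M} (hw : w ∈ Submodule.span R (Set.range v)) (f : M →ₗ[R] R)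
    (hr : IsCoprime r (f w)) :
    Submodule.span R (Set.range fun i => r • v i) ⊓ Submodule.span R {w} =
      Submodule.span R {r • w} := by
  rw [← Set.smul_set_range, ← Submodule.smul_span, smul_inf_span_singleton hw f hr]

end Module

theorem natCast_sum_nsmul_mem_span_range (R : Type*) [Semiring R] {ι κ : Type*} [Fintype ι]
    (m : ι → κ → ℕ) (s : ι → ℕ) :
    (fun j => (((∑ i, s i • m i) j : ℕ) : R)) ∈
      Submodule.span R (Set.range fun i j => (m i j : R)) := by
  have cast_sum : (fun j => (((∑ i, s i • m i) j : ℕ) : R)) =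
      ∑ i, s i • fun j => (m i j : R) := by
    ext j
    simp
  rw [cast_sum]
  exact Submodule.sum_mem _ fun i _ =>
    nsmul_mem (Submodule.subset_span (Set.mem_range_self i)) (s i)

/-- For positive integers `d, n`, vectors `m 1, …, m n ∈ ℕ^d`,
`m = s 1 • m 1 + ⋯ + s n • m n`, and a positive integer `ℓ` coprime to some
component of `m`, the intersection (inside `ℤ^d`) of the subgroup generated by
`ℓ•m 1, …, ℓ•m n` with the subgroup generated by `m` equals the subgroup
generated by `ℓ•m`. -/
theorem stmt_0 (d n : ℕ) (hd : 0 < d) (hn : 0 < n)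
    (m : Fin n → Fin d → ℕ) (s : Fin n → ℕ) (ℓ : ℕ) (hℓ : 0 < ℓ)
    (mm : Fin d → ℕ) (hmm : mm = ∑ i, s i • m i)
    (hgcd : ∃ j, Nat.gcd ℓ (mm j) = 1) :
    (Submodule.span ℤ (Set.range fun i : Fin n => fun j : Fin d => (ℓ : ℤ) * (m i j : ℤ)) ⊓
        Submodule.span ℤ {fun j : Fin d => (mm j : ℤ)} : Submodule ℤ (Fin d → ℤ)) =
      Submodule.span ℤ {fun j : Fin d => (ℓ : ℤ) * (mm j : ℤ)} := by
  obtain ⟨j, hj⟩ := hgcd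
  exact stmt_0_general (hmm ▸ natCast_sum_nsmul_mem_span_range ℤ m s) (LinearMap.proj j)
    (Nat.isCoprime_iff_coprime.2 hj)
end

section
/- Let m_1,…,m_n ∈ ℕ^d, let s_1,…,s_n ∈ ℕ, set m = s_1m_1 + ⋯ + s_nm_n, and let ℓ be a positive integer such that gcd(ℓ, m_j) = 1 for some component m_j of m. Then I_{S_{ℓ,m}} = ι(I_S) + ⟨F⟩, i.e. the kernel of ψ equals the ideal of K[x_1,…,x_{n+1}] generated by the image under ι of the kernel of φ together with the binomial F = x_{n+1}^ℓ − x_1^{s_1}⋯x_n^{s_n}. -/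
open MvPolynomial

/-!
Every polynomial in `x_1, …, x_{n+1}` is congruent modulo `F`, which is monic in `x_{n+1}`, to some
`∑_{r < ℓ} q_r x_{n+1}^r` with `q_r ∈ K[x_1, …, x_n]`. As `ψ` maps `F` to `0` and `q_r` to
`(φ q_r)(t_1^ℓ, …, t_d^ℓ)`, an element of `ker ψ` gives the relation
`∑_{r < ℓ} (φ q_r)(t_1^ℓ, …, t_d^ℓ) t^{r m} = 0`. All exponents of its `r`-th summand are
congruent to `r m` modulo `ℓ`, and these classes are distinct when `gcd(ℓ, m_1, …, m_d) = 1`. So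
every `φ q_r` vanishes, that is, `q_r ∈ ker φ`.
-/

section MonicDivision

variable {A B C : Type*} [CommRing A] [Semiring B] [CommRing C]

theorem ker_eq_map_ker_comp_sup_span_eval₂ (ι : A →+* C) (x : C)
    (hsurj : Function.Surjective (Polynomial.eval₂ ι x)) (ψ : C →+* B)
    {f : Polynomial A} (hf : f.Monic) (hfx : ψ (f.eval₂ ι x) = 0)
    (hindep : ∀ c : Fin f.natDegree → A,
      ∑ r, ψ (ι (c r)) * ψ x ^ (r : ℕ) = 0 → ∀ r, ψ (ι (c r)) = 0) :
    RingHom.ker ψ =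
      Ideal.map ι (RingHom.ker (ψ.comp ι)) ⊔ Ideal.span {f.eval₂ ι x} := by
  apply le_antisymm
  · intro p hp
    obtain ⟨P, rfl⟩ := hsurj p
    have remainder_eq :
        (P %ₘ f).eval₂ ι x = ∑ r : Fin f.natDegree, ι ((P %ₘ f).coeff r) * x ^ (r : ℕ) := by
      have hdeg : (P %ₘ f).degree < f.natDegree := by
        nontriviality A
        exact (Polynomial.degree_modByMonic_lt P hf).trans_le Polynomial.degree_le_natDegree
      rw [Polynomial.eval₂_eq_sum,
        Polynomial.sum_fin (fun r a => ι a * x ^ r) (by simp) hdeg]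
    have division : P.eval₂ ι x =
        (P %ₘ f).eval₂ ι x + f.eval₂ ι x * (P /ₘ f).eval₂ ι x := by
      rw [← Polynomial.eval₂_mul, ← Polynomial.eval₂_add, Polynomial.modByMonic_add_div]
    have remainder_mem_ker : ψ ((P %ₘ f).eval₂ ι x) = 0 := by
      simpa only [RingHom.mem_ker, division, map_add, map_mul, hfx, zero_mul, add_zero] using hp
    have coeff_mem_ker := hindep (fun r => (P %ₘ f).coeff r) <| by
      simpa only [remainder_eq, map_sum, map_mul, map_pow] using remainder_mem_ker
    rw [division, remainder_eq]
    refine add_mem (Ideal.mem_sup_left (sum_mem fun r _ => ?_)) (Ideal.mem_sup_right ?_)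
    · exact Ideal.mul_mem_right _ _ (Ideal.mem_map_of_mem ι (coeff_mem_ker r))
    · exact Ideal.mul_mem_right _ _ (Ideal.mem_span_singleton_self _)
  · exact sup_le (Ideal.map_le_iff_le_comap.2 fun _ hq => hq)
      ((Ideal.span_singleton_le_iff_mem _).2 hfx)

end MonicDivision

theorem modEq_of_forall_mul_modEq_mul {τ : Type*} {ℓ r r' : ℕ} {M : τ → ℕ} {T : Finset τ}
    (hM : ℓ.Coprime (T.gcd M)) (h : ∀ j ∈ T, r * M j ≡ r' * M j [MOD ℓ]) : r ≡ r' [MOD ℓ] := by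
  have dvd_mul_component (j) (hj : j ∈ T) : ℓ ∣ (r' - r : ℤ).natAbs * M j := by
    have := Nat.modEq_iff_dvd.1 (h j hj)
    rwa [Nat.cast_mul, Nat.cast_mul, ← sub_mul, Int.natCast_dvd, Int.natAbs_mul,
      Int.natAbs_natCast] at this
  have dvd_mul_gcd : ℓ ∣ (r' - r : ℤ).natAbs * T.gcd M := by
    simpa only [Finset.gcd_mul_left, normalize_eq] using Finset.dvd_gcd dvd_mul_component
  exact Nat.modEq_iff_dvd.2 (Int.natCast_dvd.2 (hM.dvd_of_dvd_mul_right dvd_mul_gcd))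

theorem prod_prod_pow_pow_eq_prod_pow_sum {σ τ N : Type*} [Fintype σ] [Fintype τ] [CommMonoid N]
    (x : τ → N) (m : σ → τ → ℕ) (s : σ → ℕ) :
    ∏ i, (∏ j, x j ^ m i j) ^ s i = ∏ j, x j ^ ∑ i, s i * m i j := by
  simp only [← Finset.prod_pow, ← pow_mul']
  rw [Finset.prod_comm]
  simp only [Finset.prod_pow_eq_pow_sum]

section MvPolynomial

variable {R σ τ υ : Type*}

section CommSemiring

variable [CommSemiring R]

theorem modEq_of_coeff_expand_mul_monomial_ne_zero {ℓ : ℕ} {f : MvPolynomial τ R}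
    {v w : τ →₀ ℕ} (h : coeff v (expand ℓ f * monomial w 1) ≠ 0) (j : τ) :
    w j ≡ v j [MOD ℓ] := by
  rw [coeff_mul_monomial', mul_one] at h
  split_ifs at h with hle
  · by_contra hmod
    refine h (coeff_expand_of_not_dvd _ (i := j) fun hdvd => hmod ?_)
    exact (Nat.modEq_iff_dvd' (hle j)).2 hdvd
  · exact absurd rfl h

theorem eq_zero_of_sum_expand_mul_monomial_eq_zero {ℓ : ℕ} {M : τ →₀ ℕ} {T : Finset τ}
    (hM : ℓ.Coprime (T.gcd M)) {f : Fin ℓ → MvPolynomial τ R}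
    (h : ∑ r : Fin ℓ, expand ℓ (f r) * monomial ((r : ℕ) • M) 1 = 0) (r : Fin ℓ) : f r = 0 := by
  ext u
  have coeff_other_eq_zero (r' : Fin ℓ) (hne : r' ≠ r) :
      coeff (ℓ • u + (r : ℕ) • M) (expand ℓ (f r') * monomial ((r' : ℕ) • M) 1) = 0 := by
    by_contra hcoeff
    have hmod (j : τ) : r' * M j ≡ r * M j [MOD ℓ] := by
      simpa [Nat.ModEq] using modEq_of_coeff_expand_mul_monomial_ne_zero hcoeff j
    exact hne (Fin.ext
      ((modEq_of_forall_mul_modEq_mul hM fun j _ => hmod j).eq_of_lt_of_lt r'.2 r.2))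
  have hcoeff := congrArg (coeff (ℓ • u + (r : ℕ) • M)) h
  rwa [coeff_sum, Fintype.sum_eq_single r coeff_other_eq_zero, coeff_mul_monomial, mul_one,
    coeff_expand_smul _ (Fin.pos r).ne'] at hcoeff

theorem surjective_eval₂_rename_X {k : σ → υ} {x₀ : υ} (hk : ∀ u, u = x₀ ∨ u ∈ Set.range k) :
    Function.Surjective (Polynomial.eval₂ (rename k : MvPolynomial σ R →ₐ[R] _).toRingHom
      (X x₀)) := by
  intro p
  induction p using MvPolynomial.induction_on with
  | C a => exact ⟨Polynomial.C (C a), by simp⟩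
  | add p q hp hq =>
    obtain ⟨P, rfl⟩ := hp
    obtain ⟨Q, rfl⟩ := hq
    exact ⟨P + Q, Polynomial.eval₂_add ..⟩
  | mul_X p u hp =>
    obtain ⟨P, rfl⟩ := hp
    obtain rfl | ⟨i, rfl⟩ := hk u
    · exact ⟨P * Polynomial.X, by simp⟩
    · exact ⟨P * Polynomial.C (X i), by simp⟩

theorem prod_X_pow_eq_monomial_equivFunOnFinite_symm [Fintype τ] (e : τ → ℕ) :
    ∏ j, X j ^ e j = monomial (Finsupp.equivFunOnFinite.symm e) (1 : R) := by
  simp [monomial_eq, Finsupp.prod_fintype]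

end CommSemiring

theorem ker_eq_map_rename_ker_sup_span_of_comp_rename_eq [CommRing R] {k : σ → υ} {x₀ : υ}
    (hk : ∀ u, u = x₀ ∨ u ∈ Set.range k) {ℓ : ℕ} (hℓ : 0 < ℓ)
    {φ : MvPolynomial σ R →ₐ[R] MvPolynomial τ R} {ψ : MvPolynomial υ R →ₐ[R] MvPolynomial τ R}
    (hψφ : ψ.comp (rename k) = (expand ℓ).comp φ) {M : τ →₀ ℕ} {T : Finset τ}
    (hM : ℓ.Coprime (T.gcd M)) (hψx₀ : ψ (X x₀) = monomial M 1)
    {a : MvPolynomial σ R} (ha : φ a = monomial M 1) :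
    RingHom.ker ψ =
      Ideal.map (rename k) (RingHom.ker φ) ⊔ Ideal.span {X x₀ ^ ℓ - rename k a} := by
  nontriviality R
  have ψ_rename (q : MvPolynomial σ R) : ψ (rename k q) = expand ℓ (φ q) :=
    DFunLike.congr_fun hψφ q
  have ker_comp : RingHom.ker (ψ.toRingHom.comp (rename k).toRingHom) = RingHom.ker φ := by
    ext q
    exact (ψ_rename q).congr_left.trans (expand_eq_zero hℓ)
  have ψ_binomial : ψ (X x₀ ^ ℓ - rename k a) = 0 := by
    rw [map_sub, map_pow, ψ_rename, hψx₀, ha, expand_monomial, monomial_pow, one_pow, sub_self]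
  have binomial_eq :
      (Polynomial.X ^ ℓ - Polynomial.C a).eval₂ (rename k).toRingHom (X x₀) =
        X x₀ ^ ℓ - rename k a := by
    simp
  rw [← ker_comp, ← binomial_eq]
  refine ker_eq_map_ker_comp_sup_span_eval₂ _ _ (surjective_eval₂_rename_X hk) ψ.toRingHom
    (Polynomial.monic_X_pow_sub_C a hℓ.ne') (by rwa [binomial_eq]) ?_
  rw [Polynomial.natDegree_X_pow_sub_C]
  intro c hc r
  have φ_eq_zero : φ (c r) = 0 := by
    refine eq_zero_of_sum_expand_mul_monomial_eq_zero hM (f := fun r => φ (c r)) ?_ r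
    simpa [ψ_rename, hψx₀, monomial_pow] using hc
  simp [ψ_rename, φ_eq_zero]

end MvPolynomial

theorem stmt_1_general (R : Type*) [CommRing R] (d n : ℕ)
    (m : Fin n → Fin d → ℕ) (s : Fin n → ℕ) (ℓ : ℕ) (hℓ : 0 < ℓ)
    (hgcd : Nat.gcd ℓ (Finset.univ.gcd fun j : Fin d => ∑ i, s i * m i j) = 1)
    (φ : MvPolynomial (Fin n) R →ₐ[R] MvPolynomial (Fin d) R)
    (hφ : φ = aeval fun i : Fin n => ∏ j : Fin d, X j ^ m i j)
    (ψ : MvPolynomial (Fin (n + 1)) R →ₐ[R] MvPolynomial (Fin d) R)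
    (hψ : ψ = aeval fun i : Fin (n + 1) =>
      Fin.lastCases (∏ j : Fin d, X j ^ (∑ i', s i' * m i' j))
        (fun i' : Fin n => ∏ j : Fin d, X j ^ (ℓ * m i' j)) i)
    (F : MvPolynomial (Fin (n + 1)) R)
    (hF : F = X (Fin.last n) ^ ℓ - ∏ i : Fin n, X i.castSucc ^ s i) :
    RingHom.ker ψ =
      Ideal.map (rename (Fin.castSucc : Fin n → Fin (n + 1))) (RingHom.ker φ) ⊔
        Ideal.span {F} := by
  have eq_last_or_castSucc (u : Fin (n + 1)) : u = Fin.last n ∨ u ∈ Set.range Fin.castSucc :=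
    (Fin.eq_castSucc_or_eq_last u).symm.imp_right fun ⟨i, hi⟩ => ⟨i, hi.symm⟩
  have ψ_comp_rename : ψ.comp (rename Fin.castSucc) = (expand ℓ).comp φ := by
    subst hφ hψ
    ext i : 1
    simp [pow_mul]
  have F_eq : F = X (Fin.last n) ^ ℓ - rename Fin.castSucc (∏ i, X i ^ s i) := by simp [hF]
  rw [F_eq]
  refine ker_eq_map_rename_ker_sup_span_of_comp_rename_eq eq_last_or_castSucc hℓ ψ_comp_rename
    (M := Finsupp.equivFunOnFinite.symm fun j => ∑ i, s i * m i j) hgcd ?_ ?_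
  · rw [hψ, aeval_X, Fin.lastCases_last, prod_X_pow_eq_monomial_equivFunOnFinite_symm]
  · simp only [hφ, map_prod, map_pow, aeval_X]
    rw [prod_prod_pow_pow_eq_prod_pow_sum, prod_X_pow_eq_monomial_equivFunOnFinite_symm]

/-- `I_{S_{ℓ,m}} = ι(I_S) + ⟨F⟩` where
`F = x_{n+1}^ℓ − x_1^{s_1}⋯x_n^{s_n}`, when `ℓ` is a positive integer coprime
to some component of `m = s_1 m_1 + ⋯ + s_n m_n`. -/
theorem stmt_1 (K : Type*) [Field K] (d n : ℕ)
    (m : Fin n → Fin d → ℕ) (s : Fin n → ℕ) (ℓ : ℕ) (hℓ : 0 < ℓ)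
    (hgcd : ∃ j : Fin d, Nat.gcd ℓ (∑ i, s i * m i j) = 1)
    (φ : MvPolynomial (Fin n) K →ₐ[K] MvPolynomial (Fin d) K)
    (hφ : φ = aeval fun i : Fin n => ∏ j : Fin d, X j ^ m i j)
    (ψ : MvPolynomial (Fin (n + 1)) K →ₐ[K] MvPolynomial (Fin d) K)
    (hψ : ψ = aeval fun i : Fin (n + 1) =>
      Fin.lastCases (∏ j : Fin d, X j ^ (∑ i', s i' * m i' j))
        (fun i' : Fin n => ∏ j : Fin d, X j ^ (ℓ * m i' j)) i)
    (F : MvPolynomial (Fin (n + 1)) K)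
    (hF : F = X (Fin.last n) ^ ℓ - ∏ i : Fin n, X i.castSucc ^ s i) :
    RingHom.ker ψ =
      Ideal.map (rename (Fin.castSucc : Fin n → Fin (n + 1))) (RingHom.ker φ) ⊔
        Ideal.span {F} := by
  obtain ⟨j, hj⟩ := hgcd
  exact stmt_1_general K d n m s ℓ hℓ
    (Nat.Coprime.coprime_dvd_right (Finset.gcd_dvd (Finset.mem_univ j)) hj) φ hφ ψ hψ F hF
end

section
/- Let m_1,…,m_n ∈ ℕ^d, let s_1,…,s_n ∈ ℕ, set m = s_1m_1 + ⋯ + s_nm_n, and let ℓ be a positive integer such that gcd(ℓ, m_j) = 1 for some component m_j of m. If the affine toric variety V_S is a set-theoretic complete intersection on polynomials f_1,…,f_r ∈ K[x_1,…,x_n], i.e. the radical of I_S equals the radical of ⟨f_1,…,f_r⟩, then its extension is a set-theoretic complete intersection on r+1 polynomials: the radical of I_{S_{ℓ,m}} equals the radical of the ideal of K[x_1,…,x_{n+1}] generated by ι(f_1),…,ι(f_r) and F = x_{n+1}^ℓ − x_1^{s_1}⋯x_n^{s_n}. -/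
open MvPolynomial

/-!
The heart of the matter is the identity `I_{S_{ℓ,m}} = ι(I_S) + ⟨F⟩`, after which only radicals have
to be compared. As a polynomial in `x_{n+1}`, `F` is monic of degree `ℓ`, so modulo `F` every
polynomial becomes `∑_{k<ℓ} q_k x_{n+1}^k` with `q_k ∈ K[x_1,…,x_n]`. Its image under `ψ` is
`∑_{k<ℓ} φ(q_k)(t^ℓ) t^{km}`, and the exponents of the `k`-th summand are congruent to `km` modulo
`ℓ`. Since no prime factor of `ℓ` divides all components of `m`, these classes are distinct for
`k < ℓ`, the summands cannot cancel each other, and the image vanishes only if every `φ(q_k)` does.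
-/

theorem radical_map_sup_congr {A B : Type*} [CommSemiring A] [CommSemiring B] {I J : Ideal A}
    (h : I.radical = J.radical) (f : A →+* B) (L : Ideal B) :
    (I.map f ⊔ L).radical = (J.map f ⊔ L).radical := by
  have map_le {I J : Ideal A} (h : I.radical = J.radical) : I.map f ≤ (J.map f).radical :=
    (Ideal.map_mono (Ideal.le_radical.trans h.le)).trans (Ideal.map_radical_le f)
  have radical_map : (I.map f).radical = (J.map f).radical :=
    le_antisymm (Ideal.radical_le_radical_iff.2 (map_le h))
      (Ideal.radical_le_radical_iff.2 (map_le h.symm))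
  rw [Ideal.radical_sup, radical_map, ← Ideal.radical_sup]

theorem ker_eq_map_ker_sup_span_of_monic {A B D : Type*} [CommRing A] [CommRing B] [Semiring D]
    {i : A →+* B} {x : B} (hgen : Function.Surjective (Polynomial.eval₂RingHom i x))
    {ψ : B →+* D} {P : Polynomial A} (hP : P.Monic) (hψP : ψ (P.eval₂ i x) = 0)
    (hcoeff : ∀ q : Polynomial A, q.natDegree < P.natDegree → ψ (q.eval₂ i x) = 0 →
      ∀ k, ψ (i (q.coeff k)) = 0) :
    RingHom.ker ψ = (RingHom.ker (ψ.comp i)).map i ⊔ Ideal.span {P.eval₂ i x} := by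
  apply le_antisymm
  · obtain rfl | hP_ne_one := eq_or_ne P 1
    · simp [Ideal.span_singleton_one]
    intro b hb
    obtain ⟨p, rfl⟩ := hgen b
    have division : p.eval₂ i x
        = (p %ₘ P).eval₂ i x + P.eval₂ i x * (p /ₘ P).eval₂ i x := by
      rw [← Polynomial.eval₂_mul, ← Polynomial.eval₂_add, Polynomial.modByMonic_add_div]
    rw [RingHom.mem_ker, Polynomial.coe_eval₂RingHom, division, map_add, map_mul, hψP, zero_mul,
      add_zero] at hb
    rw [Polynomial.coe_eval₂RingHom, division]
    refine add_mem (Ideal.mem_sup_left ?_) (Ideal.mem_sup_right ?_)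
    · rw [Polynomial.eval₂_eq_sum_range]
      exact sum_mem fun k _ => Ideal.mul_mem_right _ _ <| Ideal.mem_map_of_mem i <|
        hcoeff _ (Polynomial.natDegree_modByMonic_lt p hP hP_ne_one) hb k
    · exact Ideal.mul_mem_right _ _ (Ideal.mem_span_singleton_self _)
  · rw [sup_le_iff, Ideal.map_le_iff_le_comap, Ideal.span_singleton_le_iff_mem]
    exact ⟨fun _ ha => ha, hψP⟩

theorem modEq_of_forall_mul_modEq {τ : Type*} {t : Finset τ} {μ : τ → ℕ} {ℓ a b : ℕ}
    (hμ : ℓ.Coprime (t.gcd μ)) (h : ∀ j ∈ t, a * μ j ≡ b * μ j [MOD ℓ]) : a ≡ b [MOD ℓ] := by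
  have dvd_mul (j : τ) (hj : j ∈ t) : ℓ ∣ ((b : ℤ) - a).natAbs * μ j := by
    have := Nat.modEq_iff_dvd.1 (h j hj)
    rwa [Nat.cast_mul, Nat.cast_mul, ← sub_mul, ← Int.natAbs_dvd_natAbs, Int.natAbs_mul] at this
  have dvd_mul_gcd : ℓ ∣ ((b : ℤ) - a).natAbs * t.gcd μ := by
    simpa only [Finset.gcd_mul_left, normalize_eq] using Finset.dvd_gcd dvd_mul
  exact Nat.modEq_iff_dvd.2 (Int.natCast_dvd.2 (hμ.dvd_of_dvd_mul_right dvd_mul_gcd))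

section Expand

variable {τ R : Type*} [CommSemiring R] {ℓ : ℕ} {μ : τ →₀ ℕ} {t : Finset τ}

theorem coeff_expand_mul_monomial_pow (hμ : ℓ.Coprime (t.gcd μ)) {k b : ℕ} (hk : k < ℓ)
    (hb : b < ℓ) (p : MvPolynomial τ R) (u : τ →₀ ℕ) :
    coeff (ℓ • u + k • μ) (expand ℓ p * monomial μ 1 ^ b) = if b = k then coeff u p else 0 := by
  rw [monomial_pow, one_pow]
  split_ifs with hbk
  · rw [hbk, coeff_mul_monomial, coeff_expand_smul ℓ hk.ne_bot, mul_one]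
  · rw [coeff_mul_monomial', ite_eq_right_iff, mul_one]
    intro hle
    by_contra hne
    have dvd_exponent (j : τ) : ℓ ∣ (ℓ • u + k • μ - b • μ) j := by
      contrapose! hne
      exact coeff_expand_of_not_dvd p hne
    have modEq (j : τ) : b * μ j ≡ k * μ j [MOD ℓ] :=
      ((Nat.modEq_iff_dvd' (hle j)).2 (dvd_exponent j)).trans <| by simp [Nat.ModEq]
    exact hbk ((modEq_of_forall_mul_modEq hμ fun j _ => modEq j).eq_of_lt_of_lt hb hk)

theorem eq_zero_of_eval₂_expand_monomial_eq_zero (hμ : ℓ.Coprime (t.gcd μ))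
    {g : Polynomial (MvPolynomial τ R)} (hg : g.natDegree < ℓ)
    (h : g.eval₂ (expand ℓ : MvPolynomial τ R →ₐ[R] MvPolynomial τ R).toRingHom
      (monomial μ 1) = 0) : g = 0 := by
  ext k u
  obtain hk | hk := lt_or_ge k ℓ
  · calc coeff u (g.coeff k)
        = ∑ b ∈ Finset.range ℓ, if b = k then coeff u (g.coeff b) else 0 := by simp [hk]
      _ = ∑ b ∈ Finset.range ℓ,
            coeff (ℓ • u + k • μ) (expand ℓ (g.coeff b) * monomial μ 1 ^ b) :=
          Finset.sum_congr rfl fun b hb =>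
            (coeff_expand_mul_monomial_pow hμ hk (Finset.mem_range.1 hb) _ u).symm
      _ = coeff (ℓ • u + k • μ) (g.eval₂ (expand ℓ).toRingHom (monomial μ 1)) := by
          rw [Polynomial.eval₂_eq_sum_range' _ hg, coeff_sum]; rfl
      _ = 0 := by rw [h, coeff_zero]
  · rw [Polynomial.coeff_eq_zero_of_natDegree_lt (hg.trans_le hk), Polynomial.coeff_zero]

end Expand

theorem eval₂RingHom_rename_castSucc_surjective (R : Type*) [CommSemiring R] (n : ℕ) :
    Function.Surjective (Polynomial.eval₂RingHom
      (rename Fin.castSucc : MvPolynomial (Fin n) R →ₐ[R] MvPolynomial (Fin (n + 1)) R).toRingHom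
      (X (Fin.last n))) := by
  rw [← RingHom.rangeS_eq_top, eq_top_iff]
  rintro p -
  induction p using MvPolynomial.induction_on with
  | C a => exact ⟨Polynomial.C (C a), by simp⟩
  | add p q hp hq => exact add_mem hp hq
  | mul_X p j hp =>
    refine mul_mem hp ?_
    cases j using Fin.lastCases with
    | last => exact ⟨Polynomial.X, by simp⟩
    | cast j => exact ⟨Polynomial.C (X j), by simp⟩

/-- The generators `ℓ m_1, …, ℓ m_n, m` of the extension semigroup `S_{ℓ,m}`, where
`m = s_1 m_1 + ⋯ + s_n m_n` is placed last. -/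
def extensionGenerators {τ : Type*} {n : ℕ} (m : Fin n → τ → ℕ) (s : Fin n → ℕ)
    (ℓ : ℕ) : Fin (n + 1) → τ → ℕ :=
  Fin.snoc (fun i j => ℓ * m i j) fun j => ∑ i, s i * m i j

section Toric

variable (R : Type*) [CommSemiring R] {σ τ : Type*} [Fintype τ]
  {n : ℕ} (m : Fin n → τ → ℕ) (s : Fin n → ℕ) (ℓ : ℕ)

/-- The monomial parametrization `x_i ↦ t^{m_i}` of the affine toric variety of the semigroup
generated by the vectors `m_i`; its kernel is the toric ideal. -/
noncomputable def toricHom (m : σ → τ → ℕ) : MvPolynomial σ R →ₐ[R] MvPolynomial τ R :=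
  aeval fun i => ∏ j, X j ^ m i j

theorem toricHom_X_eq_monomial (m : σ → τ → ℕ) (i : σ) :
    toricHom R m (X i) = monomial (Finsupp.equivFunOnFinite.symm (m i)) 1 := by
  simp [toricHom, monomial_eq, Finsupp.prod_fintype]

theorem toricHom_extensionGenerators_comp_rename :
    (toricHom R (extensionGenerators m s ℓ)).toRingHom.comp (rename Fin.castSucc).toRingHom
      = (expand ℓ).toRingHom.comp (toricHom R m).toRingHom := by
  suffices (toricHom R (extensionGenerators m s ℓ)).comp (rename Fin.castSucc)
      = (expand ℓ).comp (toricHom R m) from congrArg AlgHom.toRingHom this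
  ext1 i
  simp [toricHom, extensionGenerators, pow_mul]

theorem toricHom_extensionGenerators_eval₂ (q : Polynomial (MvPolynomial (Fin n) R)) :
    toricHom R (extensionGenerators m s ℓ)
        (q.eval₂ (rename Fin.castSucc).toRingHom (X (Fin.last n)))
      = (q.map (toricHom R m).toRingHom).eval₂ (expand ℓ).toRingHom
        (monomial (Finsupp.equivFunOnFinite.symm fun j => ∑ i, s i * m i j) 1) := by
  have map_X_last : toricHom R (extensionGenerators m s ℓ) (X (Fin.last n))
      = monomial (Finsupp.equivFunOnFinite.symm fun j => ∑ i, s i * m i j) 1 := by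
    rw [toricHom_X_eq_monomial, extensionGenerators, Fin.snoc_last]
  rw [Polynomial.eval₂_map, ← toricHom_extensionGenerators_comp_rename, ← map_X_last]
  exact Polynomial.hom_eval₂ q _ (toricHom R (extensionGenerators m s ℓ)).toRingHom _

end Toric

section ExtensionBinomial

variable (R : Type*) [CommRing R] {τ : Type*} [Fintype τ]
  {n : ℕ} (m : Fin n → τ → ℕ) (s : Fin n → ℕ) (ℓ : ℕ)

/-- The polynomial `F = x_{n+1}^ℓ - x_1^{s_1} ⋯ x_n^{s_n}`. -/
noncomputable def extensionBinomial : MvPolynomial (Fin (n + 1)) R :=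
  X (Fin.last n) ^ ℓ - ∏ i : Fin n, X i.castSucc ^ s i

theorem toricHom_extensionBinomial :
    toricHom R (extensionGenerators m s ℓ) (extensionBinomial R s ℓ) = 0 := by
  simp only [extensionBinomial, map_sub, map_pow, map_prod, toricHom_X_eq_monomial, monomial_pow,
    one_pow, ← monomial_sum_one, sub_eq_zero]
  congr 2
  ext j
  simp [extensionGenerators, Finset.mul_sum, mul_left_comm]

theorem eval₂_rename_castSucc_X_pow_sub_C :
    Polynomial.eval₂
      (rename Fin.castSucc : MvPolynomial (Fin n) R →ₐ[R] MvPolynomial (Fin (n + 1)) R).toRingHom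
      (X (Fin.last n)) (Polynomial.X ^ ℓ - Polynomial.C (∏ i, X i ^ s i))
      = extensionBinomial R s ℓ := by
  rw [Polynomial.eval₂_sub, Polynomial.eval₂_C]
  simp [extensionBinomial]

theorem ker_toricHom_extensionGenerators {ℓ : ℕ} (hℓ : 0 < ℓ)
    (hgcd : ℓ.Coprime (Finset.univ.gcd fun j => ∑ i, s i * m i j)) :
    RingHom.ker (toricHom R (extensionGenerators m s ℓ))
      = (RingHom.ker (toricHom R m)).map (rename (Fin.castSucc : Fin n → Fin (n + 1))).toRingHom
        ⊔ Ideal.span {extensionBinomial R s ℓ} := by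
  have ker_comp : RingHom.ker ((toricHom R (extensionGenerators m s ℓ)).toRingHom.comp
      (rename Fin.castSucc).toRingHom) = RingHom.ker (toricHom R m) := by
    rw [toricHom_extensionGenerators_comp_rename]
    exact RingHom.ker_comp_of_injective _ (expand_injective hℓ)
  rw [← ker_comp, ← eval₂_rename_castSucc_X_pow_sub_C]
  refine ker_eq_map_ker_sup_span_of_monic (ψ := (toricHom R (extensionGenerators m s ℓ)).toRingHom)
    (eval₂RingHom_rename_castSucc_surjective R n) (Polynomial.monic_X_pow_sub_C _ hℓ.ne') ?_ ?_
  · rw [eval₂_rename_castSucc_X_pow_sub_C]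
    exact toricHom_extensionBinomial R m s ℓ
  intro q hq hψq k
  have natDegree_map_lt : (q.map (toricHom R m).toRingHom).natDegree < ℓ :=
    (Polynomial.natDegree_map_le.trans_lt hq).trans_le (by compute_degree)
  have map_eq_zero : q.map (toricHom R m).toRingHom = 0 :=
    eq_zero_of_eval₂_expand_monomial_eq_zero hgcd natDegree_map_lt <|
      (toricHom_extensionGenerators_eval₂ R m s ℓ q).symm.trans hψq
  have coeff_mem_ker : q.coeff k ∈ RingHom.ker (toricHom R m) := by
    simpa using congrArg (Polynomial.coeff · k) map_eq_zero
  rwa [← ker_comp] at coeff_mem_ker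

end ExtensionBinomial

theorem stmt_4_general (K : Type*) [CommRing K] {τ ι : Type*} [Fintype τ] (n : ℕ)
    (m : Fin n → τ → ℕ) (s : Fin n → ℕ) (ℓ : ℕ) (hℓ : 0 < ℓ)
    (hgcd : ℓ.Coprime (Finset.univ.gcd fun j => ∑ i, s i * m i j))
    (φ : MvPolynomial (Fin n) K →ₐ[K] MvPolynomial τ K)
    (hφ : φ = aeval fun i : Fin n => ∏ j : τ, X j ^ m i j)
    (ψ : MvPolynomial (Fin (n + 1)) K →ₐ[K] MvPolynomial τ K)
    (hψ : ψ = aeval fun i : Fin (n + 1) =>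
      Fin.lastCases (∏ j : τ, X j ^ (∑ i', s i' * m i' j))
        (fun i' : Fin n => ∏ j : τ, X j ^ (ℓ * m i' j)) i)
    (F : MvPolynomial (Fin (n + 1)) K)
    (hF : F = X (Fin.last n) ^ ℓ - ∏ i : Fin n, X i.castSucc ^ s i)
    (f : ι → MvPolynomial (Fin n) K)
    (hsci : (RingHom.ker φ).radical = (Ideal.span (Set.range f)).radical) :
    (RingHom.ker ψ).radical =
      (Ideal.span (insert F
        (Set.range fun i : ι =>
          rename (Fin.castSucc : Fin n → Fin (n + 1)) (f i)))).radical := by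
  have hφ' : φ = toricHom K m := hφ
  have hψ' : ψ = toricHom K (extensionGenerators m s ℓ) := by
    rw [hψ]
    ext1 i
    cases i using Fin.lastCases <;> simp [toricHom, extensionGenerators]
  have hF' : F = extensionBinomial K s ℓ := hF
  have span_insert : Ideal.span (insert F (Set.range fun i => rename Fin.castSucc (f i)))
      = (Ideal.span (Set.range f)).map (rename Fin.castSucc).toRingHom ⊔ Ideal.span {F} := by
    rw [Ideal.span_insert, sup_comm, Ideal.map_span, ← Set.range_comp]
    rfl
  rw [span_insert, ← radical_map_sup_congr hsci, hφ', hψ', hF',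
    ker_toricHom_extensionGenerators K m s hℓ hgcd]

/-- If the affine toric variety `V_S` is a set-theoretic complete
intersection on `f_1, …, f_r`, i.e. `√(I_S) = √⟨f_1,…,f_r⟩`, then its extension
is a set-theoretic complete intersection on `ι(f_1), …, ι(f_r), F`, where
`F = x_{n+1}^ℓ − x_1^{s_1}⋯x_n^{s_n}`. -/
theorem stmt_4 (K : Type*) [Field K] (d n r : ℕ)
    (m : Fin n → Fin d → ℕ) (s : Fin n → ℕ) (ℓ : ℕ) (hℓ : 0 < ℓ)
    (hgcd : ∃ j : Fin d, Nat.gcd ℓ (∑ i, s i * m i j) = 1)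
    (φ : MvPolynomial (Fin n) K →ₐ[K] MvPolynomial (Fin d) K)
    (hφ : φ = aeval fun i : Fin n => ∏ j : Fin d, X j ^ m i j)
    (ψ : MvPolynomial (Fin (n + 1)) K →ₐ[K] MvPolynomial (Fin d) K)
    (hψ : ψ = aeval fun i : Fin (n + 1) =>
      Fin.lastCases (∏ j : Fin d, X j ^ (∑ i', s i' * m i' j))
        (fun i' : Fin n => ∏ j : Fin d, X j ^ (ℓ * m i' j)) i)
    (F : MvPolynomial (Fin (n + 1)) K)
    (hF : F = X (Fin.last n) ^ ℓ - ∏ i : Fin n, X i.castSucc ^ s i)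
    (f : Fin r → MvPolynomial (Fin n) K)
    (hsci : (RingHom.ker φ).radical = (Ideal.span (Set.range f)).radical) :
    (RingHom.ker ψ).radical =
      (Ideal.span (insert F
        (Set.range fun i : Fin r =>
          rename (Fin.castSucc : Fin n → Fin (n + 1)) (f i)))).radical := by
  obtain ⟨j, hj⟩ := hgcd
  exact stmt_4_general K n m s ℓ hℓ
    (Nat.Coprime.coprime_dvd_right (Finset.gcd_dvd (Finset.mem_univ j)) hj) φ hφ ψ hψ F hF f hsci
end

section
/- Let m_1,…,m_n ∈ ℕ^d, let s_1,…,s_n ∈ ℕ, set m = s_1m_1 + ⋯ + s_nm_n and δ = s_1 + ⋯ + s_n, and let ℓ be a positive integer with ℓ ≥ δ such that gcd(ℓ, m_j) = 1 for some component m_j of m. If the projective toric variety defined by I_{S̄} is a set-theoretic complete intersection on homogeneous polynomials f_1,…,f_r ∈ K[x_0,…,x_n], i.e. the radical of I_{S̄} equals the radical of ⟨f_1,…,f_r⟩, then the radical of I_{S̄_{ℓ,m}} equals the radical of the ideal of K[x_0,…,x_{n+1}] generated by ῑ(f_1),…,ῑ(f_r) and F = x_{n+1}^ℓ − x_0^{ℓ−δ}x_1^{s_1}⋯x_n^{s_n}.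 -/
open MvPolynomial

/-!
The substitution `u ↦ u ^ ℓ` is injective, so applying it after `ψ̄` does not change the kernel. It
turns `ψ̄ (ῑ p)` into `φ̄ p` with every variable raised to the power `ℓ`, and `ψ̄ x_{n+1}` into the
monomial `T = u ^ ℓ t ^ m`, which is `φ̄ (x_0 ^ (ℓ - δ) x_1 ^ s_1 ⋯ x_n ^ s_n)`.
As `ℓ` is prime to an exponent of `T`, the powers `1, T, …, T ^ (ℓ - 1)` have exponents in
different classes modulo `ℓ`, so they are linearly independent over the polynomials in the `ℓ`-th
powers of the variables. Division by the monic polynomial `F` in `x_{n+1}` therefore gives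
`ker ψ̄ = ⟨ῑ (ker φ̄)⟩ + ⟨F⟩`, and the radical of the right side depends only on that of `ker φ̄`.
-/

open scoped Polynomial

section Expand

variable {σ R : Type*} [CommSemiring R] {ℓ : ℕ}

lemma coeff_smul_add_smul_expand_mul_monomial_pow_self (hℓ : ℓ ≠ 0) (w e : σ →₀ ℕ) (k : ℕ)
    (q : MvPolynomial σ R) :
    coeff (ℓ • e + k • w) (expand ℓ q * monomial w 1 ^ k) = coeff e q := by
  rw [monomial_pow, one_pow, coeff_mul_monomial, mul_one, coeff_expand_smul ℓ hℓ]

lemma coeff_smul_add_smul_expand_mul_monomial_pow_of_ne {w : σ →₀ ℕ} {j : σ}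
    (hj : ℓ.Coprime (w j)) (e : σ →₀ ℕ) {i k : ℕ} (hi : i < ℓ) (hk : k < ℓ) (hik : i ≠ k)
    (q : MvPolynomial σ R) :
    coeff (ℓ • e + k • w) (expand ℓ q * monomial w 1 ^ i) = 0 := by
  rw [monomial_pow, coeff_mul_monomial']
  split_ifs with hle
  · rw [coeff_expand_of_not_dvd (i := j), zero_mul]
    intro hdvd
    have hmod : i * w j ≡ ℓ * e j + k * w j [MOD ℓ] := (Nat.modEq_iff_dvd' (hle j)).2 hdvd
    have hmod' : i * w j ≡ k * w j [MOD ℓ] := hmod.trans (by simp [Nat.ModEq])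
    exact hik ((Nat.ModEq.cancel_right_of_coprime hj hmod').eq_of_lt_of_lt hi hk)
  · rfl

lemma eq_zero_of_sum_expand_mul_monomial_pow_eq_zero {w : σ →₀ ℕ} {j : σ}
    (hj : ℓ.Coprime (w j)) {h : ℕ → MvPolynomial σ R}
    (hsum : ∑ i ∈ Finset.range ℓ, expand ℓ (h i) * monomial w 1 ^ i = 0) {k : ℕ} (hk : k < ℓ) :
    h k = 0 := by
  ext e
  have hcoeff := congrArg (coeff (ℓ • e + k • w)) hsum
  rwa [coeff_sum, Finset.sum_eq_single_of_mem k (Finset.mem_range.2 hk) fun i hi hik =>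
      coeff_smul_add_smul_expand_mul_monomial_pow_of_ne hj e (Finset.mem_range.1 hi) hk hik _,
    coeff_smul_add_smul_expand_mul_monomial_pow_self (Nat.ne_zero_of_lt hk)] at hcoeff

lemma map_coeff_eq_zero_of_eval₂_expand_eq_zero {A : Type*} [Semiring A]
    {φ : A →+* MvPolynomial σ R} {w : σ →₀ ℕ} {j : σ} (hj : ℓ.Coprime (w j)) {p : A[X]}
    (hp : p.degree < ℓ) (h : p.eval₂ ((expand ℓ).toRingHom.comp φ) (monomial w 1) = 0) (k : ℕ) :
    φ (p.coeff k) = 0 := by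
  rcases eq_or_ne p 0 with rfl | hp0
  · simp
  rcases lt_or_ge k ℓ with hk | hk
  · rw [Polynomial.eval₂_eq_sum_range' _ ((Polynomial.natDegree_lt_iff_degree_lt hp0).2 hp)] at h
    exact eq_zero_of_sum_expand_mul_monomial_pow_eq_zero hj h hk
  · rw [Polynomial.coeff_eq_zero_of_degree_lt (hp.trans_le (by exact_mod_cast hk)), map_zero]

/-- The substitution `X i ↦ X i ^ e i`, a version of `MvPolynomial.expand` in which the power
depends on the variable. -/
noncomputable def expandBy (e : σ → ℕ) : MvPolynomial σ R →ₐ[R] MvPolynomial σ R :=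
  aeval fun i => X i ^ e i

@[simp]
lemma expandBy_X (e : σ → ℕ) (i : σ) : expandBy e (X i : MvPolynomial σ R) = X i ^ e i :=
  aeval_X _ _

lemma expandBy_injective_of_dvd (hℓ : 0 < ℓ) {e : σ → ℕ} (he : ∀ i, e i ∣ ℓ) :
    Function.Injective (expandBy e : MvPolynomial σ R →ₐ[R] MvPolynomial σ R) := by
  have hcomp : (expandBy fun i => ℓ / e i).comp (expandBy e) =
      (expand ℓ : MvPolynomial σ R →ₐ[R] MvPolynomial σ R) := by
    ext1 i
    simp [← pow_mul, Nat.div_mul_cancel (he i)]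
  have hinj := expand_injective (σ := σ) (R := R) hℓ
  rw [← hcomp, AlgHom.coe_comp] at hinj
  exact hinj.of_comp

end Expand

section Kernel

lemma ker_eq_map_C_sup_span_of_monic {A B : Type*} [CommRing A] [Semiring B] (Ψ : A[X] →+* B)
    {Q : A[X]} (hQ : Q.Monic) (hΨQ : Ψ Q = 0)
    (hrem : ∀ p : A[X], p.degree < Q.degree → Ψ p = 0 → ∀ k, Ψ (Polynomial.C (p.coeff k)) = 0) :
    RingHom.ker Ψ =
      (RingHom.ker (Ψ.comp Polynomial.C)).map Polynomial.C ⊔ Ideal.span {Q} := by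
  nontriviality A
  apply le_antisymm
  · intro p hp
    have hdiv := Polynomial.modByMonic_add_div p Q
    have hΨrem : Ψ (p %ₘ Q) = 0 := by
      rwa [← hdiv, RingHom.mem_ker, map_add, map_mul, hΨQ, zero_mul, add_zero] at hp
    rw [← hdiv]
    exact Submodule.add_mem_sup
      (Ideal.mem_map_C_iff.2 (hrem _ (Polynomial.degree_modByMonic_lt p hQ) hΨrem))
      (Ideal.mul_mem_right _ _ (Ideal.mem_span_singleton_self Q))
  · refine sup_le (Ideal.map_le_iff_le_comap.2 ?_) ((Ideal.span_singleton_le_iff_mem _).2 hΨQ)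
    rw [RingHom.comap_ker]

variable {A C S σ R : Type*} [CommRing A] [CommRing C] [Ring S] [CommRing R] {ℓ : ℕ}
  {φ : A →+* MvPolynomial σ R} {w : σ →₀ ℕ} {j : σ} {c : A}

lemma ker_eval₂_expand_eq (hℓ : 0 < ℓ) (hj : ℓ.Coprime (w j)) (hc : φ c = monomial w 1) :
    RingHom.ker (Polynomial.eval₂RingHom ((expand ℓ).toRingHom.comp φ) (monomial w 1)) =
      (RingHom.ker φ).map Polynomial.C ⊔
        Ideal.span {Polynomial.X ^ ℓ - Polynomial.C c} := by
  nontriviality A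
  set Ψ := Polynomial.eval₂RingHom ((expand ℓ).toRingHom.comp φ) (monomial w 1)
  have hΨC (a : A) : Ψ (Polynomial.C a) = expand ℓ (φ a) := by simp [Ψ]
  have hker : RingHom.ker (Ψ.comp Polynomial.C) = RingHom.ker φ := by
    ext a
    simp [RingHom.mem_ker, hΨC, expand_eq_zero hℓ]
  rw [← hker]
  refine ker_eq_map_C_sup_span_of_monic Ψ (Polynomial.monic_X_pow_sub_C c hℓ.ne') ?_ ?_
  · simp [Ψ, hc, monomial_pow]
  · intro p hp hΨp k
    rw [Polynomial.degree_X_pow_sub_C hℓ] at hp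
    rw [hΨC, map_coeff_eq_zero_of_eval₂_expand_eq_zero hj hp hΨp, map_zero]

lemma ker_eq_map_ker_sup_span {ι : A →+* C} {x : C} {ψ : C →+* S} {θ : S →+* MvPolynomial σ R}
    (hℓ : 0 < ℓ) (hj : ℓ.Coprime (w j)) (hc : φ c = monomial w 1)
    (hsurj : Function.Surjective (Polynomial.eval₂RingHom ι x)) (hθ : Function.Injective θ)
    (hι : ∀ a, θ (ψ (ι a)) = expand ℓ (φ a)) (hx : θ (ψ x) = monomial w 1) :
    RingHom.ker ψ = (RingHom.ker φ).map ι ⊔ Ideal.span {x ^ ℓ - ι c} := by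
  set ev := Polynomial.eval₂RingHom ι x
  have hcomp : θ.comp (ψ.comp ev) =
      Polynomial.eval₂RingHom ((expand ℓ).toRingHom.comp φ) (monomial w 1) := by
    ext1
    · ext1 a
      simp [ev, hι]
    · simp [ev, hx]
  have hevC : ev.comp Polynomial.C = ι := by
    ext a
    simp [ev]
  calc RingHom.ker ψ = (RingHom.ker (θ.comp (ψ.comp ev))).map ev := by
        rw [RingHom.ker_comp_of_injective _ hθ, ← RingHom.comap_ker,
          Ideal.map_comap_of_surjective _ hsurj]
    _ = (RingHom.ker φ).map ι ⊔ Ideal.span {x ^ ℓ - ι c} := by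
        rw [hcomp, ker_eval₂_expand_eq hℓ hj hc, Ideal.map_sup, Ideal.map_map, hevC,
          Ideal.map_span, Set.image_singleton]
        simp [ev]

end Kernel

lemma radical_map_sup_eq_of_radical_eq {A B : Type*} [CommSemiring A] [CommSemiring B]
    (f : A →+* B) {I J : Ideal A} (L : Ideal B) (h : I.radical = J.radical) :
    (I.map f ⊔ L).radical = (J.map f ⊔ L).radical := by
  have hle {I J : Ideal A} (h : I.radical = J.radical) :
      (I.map f ⊔ L).radical ≤ (J.map f ⊔ L).radical :=
    Ideal.radical_le_radical_iff.2 <| sup_le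
      (calc I.map f ≤ J.radical.map f := Ideal.map_mono (h ▸ Ideal.le_radical)
        _ ≤ (J.map f).radical := Ideal.map_radical_le f
        _ ≤ (J.map f ⊔ L).radical := Ideal.radical_mono le_sup_left)
      (le_sup_right.trans Ideal.le_radical)
  exact (hle h).antisymm (hle h.symm)

lemma eval₂_rename_X_surjective {σ τ R : Type*} [CommSemiring R] {f : σ → τ} {j : τ}
    (hf : ∀ i, (∃ k, i = f k) ∨ i = j) :
    Function.Surjective
      (Polynomial.eval₂RingHom (rename f : MvPolynomial σ R →ₐ[R] _).toRingHom (X j)) := by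
  intro p
  induction p using MvPolynomial.induction_on with
  | C a => exact ⟨Polynomial.C (C a), by simp⟩
  | add p q hp hq =>
    obtain ⟨p', rfl⟩ := hp
    obtain ⟨q', rfl⟩ := hq
    exact ⟨p' + q', map_add _ _ _⟩
  | mul_X p i hp =>
    obtain ⟨p', rfl⟩ := hp
    obtain ⟨k, rfl⟩ | rfl := hf i
    · exact ⟨p' * Polynomial.C (X k), by simp⟩
    · exact ⟨p' * Polynomial.X, by simp⟩

section ProjectiveClosure

variable (R : Type*) {d n : ℕ}

/-- The parametrization `φ̄` of the projective closure of the affine toric variety of the semigroup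
generated by the `m i`; the homogenizing variable `u` is `X (Fin.last d)`. -/
noncomputable def projToricMap [CommSemiring R] (m : Fin n → Fin d → ℕ) :
    MvPolynomial (Fin (n + 1)) R →ₐ[R] MvPolynomial (Fin (d + 1)) R :=
  aeval (Fin.cons (X (Fin.last d)) fun i => X (Fin.last d) * ∏ j, X j.castSucc ^ m i j)

/-- The generators `ℓ m_1, …, ℓ m_n, m` of the extension of the semigroup generated by the `m i`,
where `m = s_1 m_1 + ⋯ + s_n m_n`. -/
def extensionGens (m : Fin n → Fin d → ℕ) (s : Fin n → ℕ) (ℓ : ℕ) : Fin (n + 1) → Fin d → ℕ :=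
  Fin.snoc (fun i j => ℓ * m i j) fun j => ∑ k, s k * m k j

/-- The monomial `x_0 ^ (ℓ - δ) x_1 ^ s_1 ⋯ x_n ^ s_n` with `δ = s_1 + ⋯ + s_n`, which has
degree `ℓ` if `δ ≤ ℓ`. -/
noncomputable def extensionMonomial [CommSemiring R] (s : Fin n → ℕ) (ℓ : ℕ) :
    MvPolynomial (Fin (n + 1)) R :=
  X 0 ^ (ℓ - ∑ i, s i) * ∏ i : Fin n, X i.succ ^ s i

/-- The exponent of `t ^ m u ^ ℓ`, where `m = s_1 m_1 + ⋯ + s_n m_n`. -/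
noncomputable def extensionExponent (m : Fin n → Fin d → ℕ) (s : Fin n → ℕ) (ℓ : ℕ) :
    Fin (d + 1) →₀ ℕ :=
  Finsupp.equivFunOnFinite.symm (Fin.snoc (fun j => ∑ k, s k * m k j) ℓ)

@[simp]
lemma extensionExponent_castSucc (m : Fin n → Fin d → ℕ) (s : Fin n → ℕ) (ℓ : ℕ) (j : Fin d) :
    extensionExponent m s ℓ j.castSucc = ∑ k, s k * m k j := by
  simp [extensionExponent]

section CommSemiring

variable [CommSemiring R]

@[simp]
lemma projToricMap_X_zero (m : Fin n → Fin d → ℕ) :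
    projToricMap R m (X 0) = X (Fin.last d) := by
  simp [projToricMap]

@[simp]
lemma projToricMap_X_succ (m : Fin n → Fin d → ℕ) (i : Fin n) :
    projToricMap R m (X i.succ) = X (Fin.last d) * ∏ j, X j.castSucc ^ m i j := by
  simp [projToricMap]

lemma projToricMap_extensionGens (m : Fin n → Fin d → ℕ) (s : Fin n → ℕ) (ℓ : ℕ) :
    projToricMap R (extensionGens m s ℓ) = aeval fun i : Fin (n + 2) =>
      Fin.cases (X (Fin.last d))
        (fun i' : Fin (n + 1) =>
          Fin.lastCases
            (X (Fin.last d) * ∏ j : Fin d, X j.castSucc ^ (∑ k, s k * m k j))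
            (fun i'' : Fin n =>
              X (Fin.last d) * ∏ j : Fin d, X j.castSucc ^ (ℓ * m i'' j)) i') i := by
  ext1 i
  induction i using Fin.cases with
  | zero => simp
  | succ i => induction i using Fin.lastCases <;> simp [extensionGens, -Fin.succ_last]

lemma rename_extensionMonomial (s : Fin n → ℕ) (ℓ : ℕ) :
    rename Fin.castSucc (extensionMonomial R s ℓ) =
      X 0 ^ (ℓ - ∑ i, s i) * ∏ i : Fin n, X i.succ.castSucc ^ s i := by
  simp [extensionMonomial]

lemma monomial_extensionExponent (m : Fin n → Fin d → ℕ) (s : Fin n → ℕ) (ℓ : ℕ) :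
    monomial (extensionExponent m s ℓ) (1 : R) =
      X (Fin.last d) ^ ℓ * ∏ j : Fin d, X j.castSucc ^ ∑ k, s k * m k j := by
  rw [monomial_eq, Finsupp.prod_fintype _ _ (by simp), Fin.prod_univ_castSucc]
  simp [extensionExponent, mul_comm]

lemma projToricMap_extensionMonomial (m : Fin n → Fin d → ℕ) {s : Fin n → ℕ} {ℓ : ℕ}
    (hδ : ∑ i, s i ≤ ℓ) :
    projToricMap R m (extensionMonomial R s ℓ) = monomial (extensionExponent m s ℓ) 1 := by
  have hu : (X (Fin.last d) : MvPolynomial (Fin (d + 1)) R) ^ (ℓ - ∑ i, s i) *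
      ∏ i, X (Fin.last d) ^ s i = X (Fin.last d) ^ ℓ := by
    rw [Finset.prod_pow_eq_pow_sum, ← pow_add, Nat.sub_add_cancel hδ]
  have ht : ∏ i, (∏ j, (X j.castSucc : MvPolynomial (Fin (d + 1)) R) ^ m i j) ^ s i =
      ∏ j : Fin d, X j.castSucc ^ ∑ k, s k * m k j := by
    simp only [← Finset.prod_pow, ← pow_mul, ← Finset.prod_pow_eq_pow_sum]
    rw [Finset.prod_comm]
    simp only [mul_comm]
  rw [monomial_extensionExponent, ← hu, ← ht, mul_assoc, ← Finset.prod_mul_distrib]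
  simp [extensionMonomial, mul_pow]

variable (m : Fin n → Fin d → ℕ) (s : Fin n → ℕ) (ℓ : ℕ)

lemma expandBy_projToricMap_extensionGens_rename (p : MvPolynomial (Fin (n + 1)) R) :
    expandBy (Fin.snoc (fun _ : Fin d => 1) ℓ)
        (projToricMap R (extensionGens m s ℓ) (rename Fin.castSucc p)) =
      expand ℓ (projToricMap R m p) := by
  suffices h : ((expandBy (Fin.snoc (fun _ : Fin d => 1) ℓ)).comp
      (projToricMap R (extensionGens m s ℓ))).comp (rename Fin.castSucc) =
      (expand ℓ).comp (projToricMap R m) from DFunLike.congr_fun h p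
  ext1 i
  induction i using Fin.cases with
  | zero => simp
  | succ i => simp [extensionGens, pow_mul]

lemma expandBy_projToricMap_extensionGens_X_last :
    expandBy (Fin.snoc (fun _ : Fin d => 1) ℓ)
        (projToricMap R (extensionGens m s ℓ) (X (Fin.last (n + 1)))) =
      monomial (extensionExponent m s ℓ) 1 := by
  simp [← Fin.succ_last, extensionGens, monomial_extensionExponent]

end CommSemiring

variable [CommRing R] {m : Fin n → Fin d → ℕ} {s : Fin n → ℕ} {ℓ : ℕ}

theorem ker_projToricMap_extensionGens (hℓ : 0 < ℓ) (hδ : ∑ i, s i ≤ ℓ)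
    (hgcd : ∃ j : Fin d, Nat.gcd ℓ (∑ i, s i * m i j) = 1) :
    RingHom.ker (projToricMap R (extensionGens m s ℓ)) =
      (RingHom.ker (projToricMap R m)).map (rename Fin.castSucc).toRingHom ⊔
        Ideal.span {X (Fin.last (n + 1)) ^ ℓ - rename Fin.castSucc (extensionMonomial R s ℓ)} := by
  obtain ⟨j, hj⟩ := hgcd
  have hdvd (i : Fin (d + 1)) : Fin.snoc (α := fun _ => ℕ) (fun _ : Fin d => 1) ℓ i ∣ ℓ := by
    induction i using Fin.lastCases <;> simp
  exact ker_eq_map_ker_sup_span (φ := (projToricMap R m).toRingHom) (j := j.castSucc)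
    (ψ := (projToricMap R (extensionGens m s ℓ)).toRingHom) hℓ
    (by rwa [extensionExponent_castSucc]) (projToricMap_extensionMonomial R m hδ)
    (eval₂_rename_X_surjective Fin.eq_castSucc_or_eq_last)
    (expandBy_injective_of_dvd hℓ hdvd)
    (expandBy_projToricMap_extensionGens_rename R m s ℓ)
    (expandBy_projToricMap_extensionGens_X_last R m s ℓ)

theorem stmt_6_general (hℓ : 0 < ℓ) (hδ : ∑ i, s i ≤ ℓ)
    (hgcd : ∃ j : Fin d, Nat.gcd ℓ (∑ i, s i * m i j) = 1) {ι : Type*}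
    (f : ι → MvPolynomial (Fin (n + 1)) R)
    (hf : (RingHom.ker (projToricMap R m)).radical = (Ideal.span (Set.range f)).radical) :
    (RingHom.ker (projToricMap R (extensionGens m s ℓ))).radical =
      (Ideal.span (insert
        (X (Fin.last (n + 1)) ^ ℓ - rename Fin.castSucc (extensionMonomial R s ℓ))
        (Set.range fun i => rename Fin.castSucc (f i)))).radical := by
  rw [ker_projToricMap_extensionGens R hℓ hδ hgcd, radical_map_sup_eq_of_radical_eq _ _ hf,
    Ideal.map_span, ← Set.range_comp, Ideal.span_insert, sup_comm]
  rfl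

end ProjectiveClosure

/-- If the projective toric variety defined by `I_{S̄}` is a
set-theoretic complete intersection on homogeneous polynomials `f_1,…,f_r`,
then for `ℓ ≥ δ = s_1 + ⋯ + s_n` coprime to some component of `m`,
`√(I_{S̄_{ℓ,m}}) = √⟨ῑ(f_1),…,ῑ(f_r),F⟩` with
`F = x_{n+1}^ℓ − x_0^{ℓ−δ} x_1^{s_1}⋯x_n^{s_n}`. -/
theorem stmt_6 (K : Type*) [Field K] (d n r : ℕ)
    (m : Fin n → Fin d → ℕ) (s : Fin n → ℕ) (ℓ : ℕ) (hℓ : 0 < ℓ)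
    (hδ : ∑ i, s i ≤ ℓ)
    (hgcd : ∃ j : Fin d, Nat.gcd ℓ (∑ i, s i * m i j) = 1)
    (φbar : MvPolynomial (Fin (n + 1)) K →ₐ[K] MvPolynomial (Fin (d + 1)) K)
    (hφbar : φbar = aeval fun i : Fin (n + 1) =>
      Fin.cases (X (Fin.last d))
        (fun i' : Fin n =>
          X (Fin.last d) * ∏ j : Fin d, X j.castSucc ^ m i' j) i)
    (ψbar : MvPolynomial (Fin (n + 2)) K →ₐ[K] MvPolynomial (Fin (d + 1)) K)
    (hψbar : ψbar = aeval fun i : Fin (n + 2) =>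
      Fin.cases (X (Fin.last d))
        (fun i' : Fin (n + 1) =>
          Fin.lastCases
            (X (Fin.last d) * ∏ j : Fin d, X j.castSucc ^ (∑ k, s k * m k j))
            (fun i'' : Fin n =>
              X (Fin.last d) * ∏ j : Fin d, X j.castSucc ^ (ℓ * m i'' j)) i') i)
    (F : MvPolynomial (Fin (n + 2)) K)
    (hF : F = X (Fin.last (n + 1)) ^ ℓ -
      X (0 : Fin (n + 2)) ^ (ℓ - ∑ i, s i) *
        ∏ i : Fin n, X (i.succ.castSucc : Fin (n + 2)) ^ s i)
    (f : Fin r → MvPolynomial (Fin (n + 1)) K) (deg : Fin r → ℕ)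
    (hhom : ∀ i, (f i).IsHomogeneous (deg i))
    (hsci : (RingHom.ker φbar).radical = (Ideal.span (Set.range f)).radical) :
    (RingHom.ker ψbar).radical =
      (Ideal.span (insert F
        (Set.range fun i : Fin r =>
          rename (Fin.castSucc : Fin (n + 1) → Fin (n + 2)) (f i)))).radical := by
  subst hφbar hψbar hF
  rw [← projToricMap_extensionGens, ← rename_extensionMonomial]
  exact stmt_6_general K hℓ hδ hgcd f hsci
end

section
/- Let K be a field and let φ : K[x_1,…,x_5] → K[t_1,t_2] be the K-algebra homomorphism with φ(x_1) = t_1^6, φ(x_2) = t_2^2, φ(x_3) = t_1^7, φ(x_4) = t_1^6t_2^4, φ(x_5) = t_1^{15}. Then the kernel of φ (the toric ideal of the semigroup S generated by (6,0), (0,2), (7,0), (6,4), (15,0)) equals the ideal ⟨x_1x_2^2 − x_4, x_3^3 − x_1x_5, x_1^5 − x_5^2⟩; in particular this toric ideal of the codimension-3 toric surface V_S ⊂ A^5 is a complete intersection generated by 3 elements. -/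
open MvPolynomial

/-!
A toric ideal is spanned by the binomials `x^s - x^t` whose exponents `s`, `t` have the same weight,
so an ideal contains it as soon as these monomials agree in the quotient, which is a question about
the semigroup alone. Reading the three generators as rewriting rules `x₄ ↦ x₁x₂²`, `x₃³ ↦ x₁x₅` and
`x₅² ↦ x₁⁵` turns every monomial into a standard one `x₁^a x₂^b x₃^c x₅^e` with `c < 3` and `e < 2`,
of the same weight `(6a + 7c + 15e, 2b)`. Modulo 6 the first coordinate is `c + 3e`, so the weight
determines the standard monomial.
-/

open Finsupp (single weight)

section ToricIdeal

variable {σ τ R : Type*}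

theorem aeval_monomial_one_eq_monomial_weight [CommSemiring R] (m : σ → τ →₀ ℕ) (s : σ →₀ ℕ) :
    aeval (fun i ↦ monomial (m i) (1 : R)) (monomial s (1 : R)) = monomial (weight m s) 1 := by
  simp only [aeval_monomial, map_one, one_mul, monomial_pow, one_pow, Finsupp.weight_apply,
    Finsupp.sum, Finsupp.prod, monomial_sum_one]

theorem exists_comp_aeval_monomial_eq [CommSemiring R] {N : Type*} [AddCommMonoid N] [Module R N]
    (m : σ → τ →₀ ℕ) (f : MvPolynomial σ R →ₗ[R] N)
    (hf : ∀ s t, weight m s = weight m t → f (monomial s 1) = f (monomial t 1)) :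
    ∃ g : MvPolynomial τ R →ₗ[R] N,
      g ∘ₗ (aeval fun i ↦ monomial (m i) (1 : R)).toLinearMap = f := by
  let weightSection : (τ →₀ ℕ) → (σ →₀ ℕ) := Function.invFun (weight m)
  refine ⟨(basisMonomials τ R).constr R fun d ↦ f (monomial (weightSection d) 1),
    (basisMonomials σ R).ext fun s ↦ ?_⟩
  have h_weight : weight m (weightSection (weight m s)) = weight m s := Function.invFun_eq ⟨s, rfl⟩
  rw [coe_basisMonomials, LinearMap.comp_apply, AlgHom.toLinearMap_apply,
    aeval_monomial_one_eq_monomial_weight, ← hf _ _ h_weight]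
  simpa only [coe_basisMonomials] using (basisMonomials τ R).constr_basis R _ (weight m s)

variable (R) in
/-- The toric ideal of the affine semigroup generated by the vectors `m i`: the kernel of the
algebra map sending the variable `x_i` to the monomial `t^(m i)`. -/
noncomputable def toricIdeal [CommSemiring R] (m : σ → τ →₀ ℕ) : Ideal (MvPolynomial σ R) :=
  RingHom.ker (aeval (R := R) fun i ↦ monomial (m i) (1 : R))

variable [CommRing R]

variable (R) in
theorem toricIdeal_eq_span_binomials (m : σ → τ →₀ ℕ) :
    toricIdeal R m =
      Ideal.span {p | ∃ s t, weight m s = weight m t ∧ p = monomial s 1 - monomial t 1} := by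
  set J := Ideal.span {p : MvPolynomial σ R |
    ∃ s t, weight m s = weight m t ∧ p = monomial s 1 - monomial t 1}
  refine le_antisymm (fun p hp ↦ ?_) (Ideal.span_le.2 ?_)
  · obtain ⟨g, hg⟩ := exists_comp_aeval_monomial_eq m (Ideal.Quotient.mkₐ R J).toLinearMap
      fun s t hst ↦ Ideal.Quotient.eq.2 (Ideal.subset_span ⟨s, t, hst, rfl⟩)
    have h_image : aeval (fun i ↦ monomial (m i) (1 : R)) p = 0 := hp
    refine Ideal.Quotient.eq_zero_iff_mem.1 ?_
    rw [← Ideal.Quotient.mkₐ_eq_mk R, ← AlgHom.toLinearMap_apply, ← hg, LinearMap.comp_apply,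
      AlgHom.toLinearMap_apply, h_image, map_zero]
  · rintro _ ⟨s, t, hst, rfl⟩
    rw [SetLike.mem_coe, toricIdeal, RingHom.mem_ker, map_sub,
      aeval_monomial_one_eq_monomial_weight, aeval_monomial_one_eq_monomial_weight, hst, sub_self]

theorem toricIdeal_le_of_prod_pow_eq [Fintype σ] {m : σ → τ →₀ ℕ} {I : Ideal (MvPolynomial σ R)}
    (h : ∀ s t, weight m s = weight m t →
      ∏ i, Ideal.Quotient.mk I (X i) ^ s i = ∏ i, Ideal.Quotient.mk I (X i) ^ t i) :
    toricIdeal R m ≤ I := by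
  rw [toricIdeal_eq_span_binomials, Ideal.span_le]
  rintro _ ⟨s, t, hst, rfl⟩
  refine Ideal.Quotient.eq.1 ?_
  simpa only [monomial_eq, map_one, one_mul, Finsupp.prod_pow, map_prod, map_pow] using h s t hst

end ToricIdeal

section Surface

/-- The generators `(6,0), (0,2), (7,0), (6,4), (15,0)` of the semigroup `S`. -/
noncomputable def surfaceGenerators : Fin 5 → Fin 2 →₀ ℕ :=
  ![single 0 6, single 1 2, single 0 7, single 0 6 + single 1 4, single 0 15]

theorem weight_surfaceGenerators_zero (s : Fin 5 →₀ ℕ) :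
    weight surfaceGenerators s 0 = 6 * s 0 + 7 * s 2 + 6 * s 3 + 15 * s 4 := by
  simp [Finsupp.weight_eq_sum, surfaceGenerators, Fin.sum_univ_five, mul_comm]

theorem weight_surfaceGenerators_one (s : Fin 5 →₀ ℕ) :
    weight surfaceGenerators s 1 = 2 * s 1 + 4 * s 3 := by
  simp [Finsupp.weight_eq_sum, surfaceGenerators, Fin.sum_univ_five, mul_comm]

theorem toricIdeal_surfaceGenerators (R : Type*) [CommSemiring R] :
    toricIdeal R surfaceGenerators = RingHom.ker (aeval (R := R)
      ![X 0 ^ 6, X 1 ^ 2, X 0 ^ 7, X 0 ^ 6 * X 1 ^ 4, (X 0 ^ 15 : MvPolynomial (Fin 2) R)]) := by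
  rw [toricIdeal]
  congr 2
  funext i
  fin_cases i <;> simp [surfaceGenerators, X_pow_eq_monomial]

/-- The equations `v₁v₂² = v₄`, `v₃³ = v₁v₅`, `v₁⁵ = v₅²` of the surface, for a tuple in a
commutative monoid; `v 0, …, v 4` are `v₁, …, v₅`. Monoid elements suffice since the equations
involve only monomials. -/
structure SurfaceRelations {M : Type*} [CommMonoid M] (v : Fin 5 → M) : Prop where
  mul_sq : v 0 * v 1 ^ 2 = v 3
  cube : v 2 ^ 3 = v 0 * v 4
  pow_five : v 0 ^ 5 = v 4 ^ 2

variable {M : Type*} [CommMonoid M] {v : Fin 5 → M}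

theorem SurfaceRelations.exists_standard_monomial (h : SurfaceRelations v) (s : Fin 5 →₀ ℕ) :
    ∃ a b c e, c < 3 ∧ e < 2 ∧ weight surfaceGenerators s 0 = 6 * a + 7 * c + 15 * e ∧
      weight surfaceGenerators s 1 = 2 * b ∧
      ∏ i, v i ^ s i = v 0 ^ a * v 1 ^ b * v 2 ^ c * v 4 ^ e := by
  obtain ⟨q, c, hc, hqc⟩ : ∃ q c, c < 3 ∧ s 2 = 3 * q + c :=
    ⟨s 2 / 3, s 2 % 3, by omega, by omega⟩
  obtain ⟨k, e, he, hke⟩ : ∃ k e, e < 2 ∧ q + s 4 = 2 * k + e :=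
    ⟨(q + s 4) / 2, (q + s 4) % 2, by omega, by omega⟩
  have hv₂ : v 2 ^ s 2 = v 0 ^ q * v 4 ^ q * v 2 ^ c := by
    rw [hqc, pow_add, pow_mul, h.cube, mul_pow]
  have hv₃ : v 3 ^ s 3 = v 0 ^ s 3 * v 1 ^ (2 * s 3) := by rw [← h.mul_sq, mul_pow, pow_mul]
  have hv₄ : v 4 ^ q * v 4 ^ s 4 = v 0 ^ (5 * k) * v 4 ^ e := by
    rw [← pow_add, hke, pow_add, pow_mul, ← h.pow_five, pow_mul]
  refine ⟨s 0 + s 3 + q + 5 * k, s 1 + 2 * s 3, c, e, hc, he, ?_, ?_, ?_⟩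
  · rw [weight_surfaceGenerators_zero]
    omega
  · rw [weight_surfaceGenerators_one]
    omega
  · calc ∏ i, v i ^ s i
        = v 0 ^ (s 0 + s 3 + q) * v 1 ^ (s 1 + 2 * s 3) * v 2 ^ c * (v 4 ^ q * v 4 ^ s 4) := by
          rw [Fin.prod_univ_five, hv₂, hv₃]
          simp only [pow_add]
          ac_rfl
      _ = v 0 ^ (s 0 + s 3 + q + 5 * k) * v 1 ^ (s 1 + 2 * s 3) * v 2 ^ c * v 4 ^ e := by
          rw [hv₄, pow_add (v 0) _ (5 * k)]
          ac_rfl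

theorem standard_exponents_unique {a c e a' c' e' : ℕ} (hc : c < 3) (he : e < 2) (hc' : c' < 3)
    (he' : e' < 2) (h : 6 * a + 7 * c + 15 * e = 6 * a' + 7 * c' + 15 * e') :
    a = a' ∧ c = c' ∧ e = e' := by
  have h_mod : c + 3 * e = c' + 3 * e' := by omega
  omega

theorem SurfaceRelations.prod_pow_eq_of_weight_eq (h : SurfaceRelations v) {s t : Fin 5 →₀ ℕ}
    (hst : weight surfaceGenerators s = weight surfaceGenerators t) :
    ∏ i, v i ^ s i = ∏ i, v i ^ t i := by
  obtain ⟨a, b, c, e, hc, he, hs₀, hs₁, hs⟩ := h.exists_standard_monomial s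
  obtain ⟨a', b', c', e', hc', he', ht₀, ht₁, ht⟩ := h.exists_standard_monomial t
  rw [hst] at hs₀ hs₁
  obtain ⟨rfl, rfl, rfl⟩ := standard_exponents_unique hc he hc' he' (hs₀.symm.trans ht₀)
  obtain rfl : b = b' := by omega
  rw [hs, ht]

theorem span_le_ker_iff_surfaceRelations {R A F : Type*} [CommRing R] [CommRing A]
    [FunLike F (MvPolynomial (Fin 5) R) A] [RingHomClass F (MvPolynomial (Fin 5) R) A] (f : F) :
    Ideal.span {X 0 * X 1 ^ 2 - X 3, X 2 ^ 3 - X 0 * X 4, X 0 ^ 5 - X 4 ^ 2} ≤ RingHom.ker f ↔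
      SurfaceRelations fun i ↦ f (X i) := by
  simp only [Ideal.span_le, Set.insert_subset_iff, Set.singleton_subset_iff, SetLike.mem_coe,
    RingHom.mem_ker, map_sub, map_mul, map_pow, sub_eq_zero]
  exact ⟨fun ⟨h₁, h₂, h₃⟩ ↦ ⟨h₁, h₂, h₃⟩, fun ⟨h₁, h₂, h₃⟩ ↦ ⟨h₁, h₂, h₃⟩⟩

end Surface

theorem stmt_12_general (R : Type*) [CommRing R]
    (φ : MvPolynomial (Fin 5) R →ₐ[R] MvPolynomial (Fin 2) R)
    (hφ : φ = aeval ![X 0 ^ 6, X 1 ^ 2, X 0 ^ 7, X 0 ^ 6 * X 1 ^ 4, X 0 ^ 15]) :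
    RingHom.ker φ =
      Ideal.span {X 0 * X 1 ^ 2 - X 3, X 2 ^ 3 - X 0 * X 4, X 0 ^ 5 - X 4 ^ 2} := by
  apply le_antisymm
  · rw [hφ, ← toricIdeal_surfaceGenerators]
    refine toricIdeal_le_of_prod_pow_eq fun s t hst ↦
      SurfaceRelations.prod_pow_eq_of_weight_eq ?_ hst
    exact (span_le_ker_iff_surfaceRelations _).1 Ideal.mk_ker.ge
  · rw [span_le_ker_iff_surfaceRelations, hφ]
    constructor <;> simp <;> ring

/-- The toric ideal of the semigroup generated by
`(6,0), (0,2), (7,0), (6,4), (15,0)`, i.e. the kernel of the `K`-algebra map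
`φ : K[x_1,…,x_5] → K[t_1,t_2]` with `φ(x_1)=t_1^6`, `φ(x_2)=t_2^2`,
`φ(x_3)=t_1^7`, `φ(x_4)=t_1^6 t_2^4`, `φ(x_5)=t_1^{15}`, equals
`⟨x_1x_2^2 − x_4, x_3^3 − x_1x_5, x_1^5 − x_5^2⟩` (a complete intersection on
3 generators, of codimension 3). -/
theorem stmt_12 (K : Type*) [Field K]
    (φ : MvPolynomial (Fin 5) K →ₐ[K] MvPolynomial (Fin 2) K)
    (hφ : φ = aeval ![X 0 ^ 6, X 1 ^ 2, X 0 ^ 7, X 0 ^ 6 * X 1 ^ 4, X 0 ^ 15]) :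
    RingHom.ker φ =
      Ideal.span {X 0 * X 1 ^ 2 - X 3, X 2 ^ 3 - X 0 * X 4, X 0 ^ 5 - X 4 ^ 2} :=
  stmt_12_general K φ hφ
end
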